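/- Weak comparison principle for non-negative potentials: Let p ∈ (1,∞), let V ⊊ X, and assume c ≥ 0 on V. Let u, v ∈ F(V) satisfy Hu ≤ Hv on V and u ≤ v on ∂V, and assume the function (v−u) ∧ 0 attains a minimum on V (i.e., there is x₀ ∈ V with min(v(x₀)−u(x₀), 0) ≤ min(v(y)−u(y), 0) for all y ∈ V). Then u ≤ v on V. Moreover, on each connected component of V, either u = v or u < v. -/

import Mathlib

open scoped BigOperators

/-- `⟨a⟩_p := |a|^{p-1} · sgn(a)`. -/
noncomputable def pPow (p a : ℝ) : ℝ := |a| ^ (p - 1) * Real.sign a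

/-- `C(V)`: real-valued functions on `X` vanishing outside `V`. -/
def MemC {X : Type*} (V : Set X) (f : X → ℝ) : Prop := ∀ x ∉ V, f x = 0

/-- `C_c(V)`: finitely supported functions with support contained in `V`. -/
def MemCc {X : Type*} (V : Set X) (f : X → ℝ) : Prop :=
  (Function.support f).Finite ∧ ∀ x ∉ V, f x = 0

/-- The formal space `F(V)`. -/
def MemF {X : Type*} (b : X → X → ℝ) (p : ℝ) (V : Set X) (f : X → ℝ) : Prop :=
  ∀ x ∈ V, Summable fun y => b x y * |f y| ^ (p - 1)

/-- The domain `D` of the energy functional. -/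
def MemD {X : Type*} (b : X → X → ℝ) (c : X → ℝ) (p : ℝ) (f : X → ℝ) : Prop :=
  (Summable fun z : X × X => b z.1 z.2 * |f z.1 - f z.2| ^ p) ∧
  (Summable fun x => |c x| * |f x| ^ p)

/-- The `p`-energy functional `h`. -/
noncomputable def energy {X : Type*} (b : X → X → ℝ) (c : X → ℝ) (p : ℝ) (f : X → ℝ) : ℝ :=
  (1 / 2) * ∑' z : X × X, b z.1 z.2 * |f z.1 - f z.2| ^ p + ∑' x, c x * |f x| ^ p

/-- The `p`-Schrödinger operator `H`. -/
noncomputable def HOp {X : Type*} (m : X → ℝ) (b : X → X → ℝ) (c : X → ℝ) (p : ℝ)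
    (f : X → ℝ) (x : X) : ℝ :=
  (1 / m x) * ∑' y, b x y * pPow p (f x - f y) + (c x / m x) * pPow p (f x)

/-- The `p`-Laplacian `L` (i.e. `H` with potential `0`). -/
noncomputable def LOp {X : Type*} (m : X → ℝ) (b : X → X → ℝ) (p : ℝ)
    (f : X → ℝ) (x : X) : ℝ :=
  (1 / m x) * ∑' y, b x y * pPow p (f x - f y)

/-- `(X, m, b)` is a weighted graph. -/
def IsGraph {X : Type*} (m : X → ℝ) (b : X → X → ℝ) : Prop :=
  (∀ x, 0 < m x) ∧ (∀ x y, 0 ≤ b x y) ∧ (∀ x y, b x y = b y x) ∧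
  (∀ x, b x x = 0) ∧ (∀ x, Summable fun y => b x y)

/-- A set `V` is connected w.r.t. the graph: any two of its vertices are joined by a
path of neighbours inside `V`. -/
def ConnectedIn {X : Type*} (b : X → X → ℝ) (V : Set X) : Prop :=
  ∀ x ∈ V, ∀ y ∈ V, Relation.ReflTransGen (fun u v => u ∈ V ∧ v ∈ V ∧ 0 < b u v) x y

/-- The (outer) boundary `∂V`. -/
def bdry {X : Type*} (b : X → X → ℝ) (V : Set X) : Set X :=
  {y | y ∉ V ∧ ∃ z ∈ V, 0 < b y z}

/-- `u` is harmonic on `V` (w.r.t. `H`). -/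
def HarmonicOn {X : Type*} (m : X → ℝ) (b : X → X → ℝ) (c : X → ℝ) (p : ℝ)
    (V : Set X) (u : X → ℝ) : Prop := ∀ x ∈ V, HOp m b c p u x = 0

/-- `u` is superharmonic on `V` (w.r.t. `H`). -/
def SuperharmonicOn {X : Type*} (m : X → ℝ) (b : X → X → ℝ) (c : X → ℝ) (p : ℝ)
    (V : Set X) (u : X → ℝ) : Prop := ∀ x ∈ V, 0 ≤ HOp m b c p u x

/-- `h` is non-negative on `C_c(V)`. -/
def EnergyNonneg {X : Type*} (b : X → X → ℝ) (c : X → ℝ) (p : ℝ) (V : Set X) : Prop :=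
  ∀ φ : X → ℝ, MemCc V φ → 0 ≤ energy b c p φ

/-- `h` is subcritical in `V`: a Hardy inequality holds. -/
def Subcritical {X : Type*} (b : X → X → ℝ) (c : X → ℝ) (p : ℝ) (V : Set X) : Prop :=
  ∃ w : X → ℝ, (∀ x, 0 ≤ w x) ∧ w ≠ 0 ∧
    ∀ φ : X → ℝ, MemCc V φ → (∑' x, |φ x| ^ p * w x) ≤ energy b c p φ

/-- `h` is critical in `V`. -/
def Critical {X : Type*} (b : X → X → ℝ) (c : X → ℝ) (p : ℝ) (V : Set X) : Prop :=
  EnergyNonneg b c p V ∧ ¬ Subcritical b c p V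

/-- The bottom of the spectrum / variational constant `λ₀(V)`. -/
noncomputable def lam0 {X : Type*} (m : X → ℝ) (b : X → X → ℝ) (c : X → ℝ) (p : ℝ)
    (V : Set X) : ℝ :=
  sInf {r : ℝ | ∃ φ : X → ℝ, MemCc V φ ∧ φ ≠ 0 ∧
    r = energy b c p φ / ∑' x, |φ x| ^ p * m x}

/-- The variational `p`-capacity `cap_h(x, V)`. -/
noncomputable def capH {X : Type*} (b : X → X → ℝ) (c : X → ℝ) (p : ℝ)
    (V : Set X) (x : X) : ℝ :=
  sInf {r : ℝ | ∃ φ : X → ℝ, MemCc V φ ∧ φ x = 1 ∧ r = energy b c p φ}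

/-- The weighted bracket `⟨f, g⟩_V = Σ_{x ∈ V} f(x) g(x) m(x)`. -/
noncomputable def bracket {X : Type*} (m : X → ℝ) (V : Set X) (f g : X → ℝ) : ℝ :=
  ∑' x, Set.indicator V (fun x => f x * g x * m x) x

/-- `u ∈ M(V ∖ K)`: positive harmonic function of minimal growth in a neighbourhood of
infinity in `V` (harmonic on `V∖K`, positive on `V ∪ ∂V`). -/
def MemM {X : Type*} (m : X → ℝ) (b : X → X → ℝ) (c : X → ℝ) (p : ℝ)
    (V K : Set X) (u : X → ℝ) : Prop :=
  HarmonicOn m b c p (V \ K) u ∧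
  (∀ x ∈ V ∪ bdry b V, 0 ≤ u x) ∧ (∃ x ∈ V ∪ bdry b V, u x ≠ 0) ∧
  ∀ K' : Set X, K ⊆ K' → K' ⊆ V → K'.Finite → ConnectedIn b K' →
    ∀ v : X → ℝ, MemF b p (V \ K') v →
      (∀ x ∈ V \ K', 0 ≤ v x) → (∃ x ∈ V \ K', v x ≠ 0) →
      SuperharmonicOn m b c p (V \ K') v →
      (∀ x ∈ K', u x ≤ v x) → ∀ x ∈ V \ K', u x ≤ v x

/-- `u` is a normalised Green's function in `V` at `o`. -/
def IsNormalisedGreen {X : Type*} (m : X → ℝ) (b : X → X → ℝ) (c : X → ℝ) (p : ℝ)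
    (V : Set X) (o : X) (u : X → ℝ) : Prop :=
  MemM m b c p V {o} u ∧ MemF b p V u ∧ HOp m b c p u o ≠ 0 ∧
  ∀ x ∈ V, HOp m b c p u x = Set.indicator {o} (fun _ => (1:ℝ)) x


/-- `W` is a connected component of `V`: a maximal connected subset of `V`. -/
def IsComponentIn {X : Type*} (b : X → X → ℝ) (V W : Set X) : Prop :=
  W ⊆ V ∧ W.Nonempty ∧ ConnectedIn b W ∧
  ∀ W' : Set X, W ⊆ W' → W' ⊆ V → ConnectedIn b W' → W' = W

/-!
If `v - u` at a vertex `x` is at most its value at every neighbour, then `∇_{x,y} v ≤ ∇_{x,y} u` for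
every neighbour `y`. As `⟨·⟩_p` is strictly increasing, `Hu(x) ≤ Hv(x)` then forces `v - u` to have
the same value at all neighbours of `x` as at `x`, provided `c(x)⟨v(x)⟩_p ≤ c(x)⟨u(x)⟩_p`. For
`c ≥ 0` this proviso holds at a negative minimum of `v - u`, so the set where such a minimum is
attained has empty boundary, which is impossible in a connected graph with `V ≠ X`. Where `u ≤ v`
touch, the proviso is an equality, so in a connected set the contact set is empty or everything.
-/

section PowerMap

theorem pPow_neg (p a : ℝ) : pPow p (-a) = -pPow p a := by
  simp only [pPow, abs_neg, Real.sign_neg, mul_neg]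

theorem pPow_of_nonneg {p a : ℝ} (hp : p ≠ 1) (ha : 0 ≤ a) : pPow p a = a ^ (p - 1) := by
  rcases ha.eq_or_lt with rfl | ha
  · simp [pPow, Real.zero_rpow (sub_ne_zero.2 hp)]
  · rw [pPow, abs_of_pos ha, Real.sign_of_pos ha, mul_one]

theorem abs_pPow_le (p a : ℝ) : |pPow p a| ≤ |a| ^ (p - 1) := by
  have h_sign : |Real.sign a| ≤ 1 := by
    rcases Real.sign_apply_eq a with h | h | h <;> simp [h]
  have h_rpow : 0 ≤ |a| ^ (p - 1) := Real.rpow_nonneg (abs_nonneg a) _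
  rw [pPow, abs_mul, abs_of_nonneg h_rpow]
  exact mul_le_of_le_one_right h_rpow h_sign

theorem pPow_strictMono {p : ℝ} (hp : 1 < p) : StrictMono (pPow p) := by
  refine strictMono_of_odd_strictMonoOn_nonneg (pPow_neg p) ?_
  exact (Real.strictMonoOn_rpow_Ici_of_exponent_pos (sub_pos.2 hp)).congr
    fun a ha => (pPow_of_nonneg hp.ne' ha).symm

theorem add_rpow_le_two_rpow_mul_add {a b q : ℝ} (ha : 0 ≤ a) (hb : 0 ≤ b) (hq : 0 ≤ q) :
    (a + b) ^ q ≤ 2 ^ q * (a ^ q + b ^ q) := calc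
  (a + b) ^ q ≤ (2 * max a b) ^ q := by
    gcongr
    linarith [le_max_left a b, le_max_right a b]
  _ = 2 ^ q * max (a ^ q) (b ^ q) := by
    rw [Real.mul_rpow zero_le_two (le_max_of_le_left ha), Real.rpow_max ha hb hq]
  _ ≤ 2 ^ q * (a ^ q + b ^ q) := by
    gcongr
    exact max_le_add_of_nonneg (Real.rpow_nonneg ha q) (Real.rpow_nonneg hb q)

theorem abs_pPow_sub_le {p : ℝ} (hp : 1 ≤ p) (s t : ℝ) :
    |pPow p (s - t)| ≤ 2 ^ (p - 1) * (|s| ^ (p - 1) + |t| ^ (p - 1)) := calc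
  |pPow p (s - t)| ≤ |s - t| ^ (p - 1) := abs_pPow_le p (s - t)
  _ ≤ (|s| + |t|) ^ (p - 1) :=
    Real.rpow_le_rpow (abs_nonneg _) (abs_sub s t) (sub_nonneg.2 hp)
  _ ≤ 2 ^ (p - 1) * (|s| ^ (p - 1) + |t| ^ (p - 1)) :=
    add_rpow_le_two_rpow_mul_add (abs_nonneg s) (abs_nonneg t) (sub_nonneg.2 hp)

theorem summable_mul_pPow_sub {ι : Type*} {w f : ι → ℝ} {p : ℝ} (hp : 1 ≤ p)
    (hw_nonneg : ∀ i, 0 ≤ w i) (hw : Summable w)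
    (hf : Summable fun i => w i * |f i| ^ (p - 1)) (t : ℝ) :
    Summable fun i => w i * pPow p (t - f i) := by
  have h_dom : Summable fun i =>
      2 ^ (p - 1) * (w i * |t| ^ (p - 1) + w i * |f i| ^ (p - 1)) :=
    ((hw.mul_right _).add hf).mul_left _
  refine h_dom.of_norm_bounded fun i => ?_
  calc ‖w i * pPow p (t - f i)‖ = w i * |pPow p (t - f i)| := by
        rw [Real.norm_eq_abs, abs_mul, abs_of_nonneg (hw_nonneg i)]
    _ ≤ w i * (2 ^ (p - 1) * (|t| ^ (p - 1) + |f i| ^ (p - 1))) :=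
        mul_le_mul_of_nonneg_left (abs_pPow_sub_le hp t (f i)) (hw_nonneg i)
    _ = 2 ^ (p - 1) * (w i * |t| ^ (p - 1) + w i * |f i| ^ (p - 1)) := by ring

end PowerMap

section Boundary

variable {X : Type*} {b : X → X → ℝ} {S V W : Set X}

theorem mem_union_bdry_of_adj {x y : X} (hx : x ∈ V) (hyx : 0 < b y x) : y ∈ V ∪ bdry b V := by
  by_cases hy : y ∈ V
  · exact Or.inl hy
  · exact Or.inr ⟨hy, x, hx, hyx⟩

theorem union_bdry_mono (hWV : W ⊆ V) : W ∪ bdry b W ⊆ V ∪ bdry b V := by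
  rintro y (hy | ⟨-, x, hx, hyx⟩)
  · exact Or.inl (hWV hy)
  · exact mem_union_bdry_of_adj (hWV hx) hyx

theorem ConnectedIn.bdry_inter_nonempty (hW : ConnectedIn b W) (hb : ∀ x y, b x y = b y x)
    (hSW : S ⊆ W) (hS : S.Nonempty) (hne : S ≠ W) : (bdry b S ∩ W).Nonempty := by
  by_contra! h_empty
  obtain ⟨x, hx⟩ := hS
  refine hne (hSW.antisymm fun z hz => ?_)
  induction hW x (hSW hx) z hz with
  | refl => exact hx
  | @tail y z _ hyz ih =>
    obtain ⟨hyW, hzW, h_adj⟩ := hyz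
    by_contra hzS
    exact h_empty.subset ⟨⟨hzS, y, ih hyW, hb y z ▸ h_adj⟩, hzW⟩

end Boundary

section Comparison

variable {X : Type*} {m : X → ℝ} {b : X → X → ℝ} {c : X → ℝ} {p : ℝ} {V : Set X} {u v : X → ℝ}
  {x y : X}

theorem tsum_mul_pPow_sub_lt (hG : IsGraph m b) (hp : 1 < p)
    (hu : Summable fun z => b x z * |u z| ^ (p - 1))
    (hv : Summable fun z => b x z * |v z| ^ (p - 1))
    (hle : ∀ z, 0 < b x z → v x - v z ≤ u x - u z)
    (hxy : 0 < b x y) (hlt : v x - v y < u x - u y) :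
    ∑' z, b x z * pPow p (v x - v z) < ∑' z, b x z * pPow p (u x - u z) := by
  obtain ⟨-, hb, -, -, hdeg⟩ := hG
  refine Summable.tsum_lt_tsum (i := y) (fun z => ?_)
    (mul_lt_mul_of_pos_left (pPow_strictMono hp hlt) hxy)
    (summable_mul_pPow_sub hp.le (hb x) (hdeg x) hv (v x))
    (summable_mul_pPow_sub hp.le (hb x) (hdeg x) hu (u x))
  rcases (hb x z).eq_or_lt with hxz | hxz
  · simp only [← hxz, zero_mul, le_refl]
  · exact mul_le_mul_of_nonneg_left ((pPow_strictMono hp).monotone (hle z hxz)) hxz.le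

theorem sub_eq_sub_of_hOp_le (hG : IsGraph m b) (hp : 1 < p)
    (hu : Summable fun z => b x z * |u z| ^ (p - 1))
    (hv : Summable fun z => b x z * |v z| ^ (p - 1))
    (hH : HOp m b c p u x ≤ HOp m b c p v x)
    (hc : c x * pPow p (v x) ≤ c x * pPow p (u x))
    (hmin : ∀ z, 0 < b x z → v x - u x ≤ v z - u z) (hxy : 0 < b x y) :
    v y - u y = v x - u x := by
  by_contra hne
  have hlt : v x - v y < u x - u y := by
    linarith [lt_of_le_of_ne (hmin y hxy) (Ne.symm hne)]
  have h_sum : ∑' z, b x z * pPow p (v x - v z) < ∑' z, b x z * pPow p (u x - u z) :=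
    tsum_mul_pPow_sub_lt hG hp hu hv (fun z hz => by linarith [hmin z hz]) hxy hlt
  have h_lt : HOp m b c p v x < HOp m b c p u x := by
    simp only [HOp, div_mul_eq_mul_div, one_mul, ← add_div]
    exact div_lt_div_of_pos_right (add_lt_add_of_lt_of_le h_sum hc) (hG.1 x)
  exact h_lt.not_ge hH

theorem le_of_hOp_le (hG : IsGraph m b) (hp : 1 < p)
    (hV : ∀ S ⊆ V, S.Nonempty → (bdry b S).Nonempty) (hc : ∀ x ∈ V, 0 ≤ c x)
    (hu : MemF b p V u) (hv : MemF b p V v)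
    (hH : ∀ x ∈ V, HOp m b c p u x ≤ HOp m b c p v x)
    (hbd : ∀ x ∈ bdry b V, u x ≤ v x)
    (hmin : ∃ x₀ ∈ V, ∀ y ∈ V, min (v x₀ - u x₀) 0 ≤ min (v y - u y) 0) :
    ∀ x ∈ V, u x ≤ v x := by
  obtain ⟨x₀, hx₀, hmin⟩ := hmin
  rcases le_or_gt 0 (v x₀ - u x₀) with h_nonneg | h_neg
  · intro x hx
    simpa [min_eq_right h_nonneg] using hmin x hx
  exfalso
  have h_le : ∀ y ∈ V ∪ bdry b V, v x₀ - u x₀ ≤ v y - u y := by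
    rintro y (hy | hy)
    · exact (min_eq_left h_neg.le ▸ hmin y hy).trans (min_le_left _ _)
    · linarith [hbd y hy]
  obtain ⟨y, hyS, x, ⟨hxV, hx_min⟩, hyx⟩ :=
    hV {x ∈ V | v x - u x = v x₀ - u x₀} (Set.sep_subset _ _) ⟨x₀, hx₀, rfl⟩
  have hy_min : v y - u y = v x₀ - u x₀ := by
    refine (sub_eq_sub_of_hOp_le hG hp (hu x hxV) (hv x hxV) (hH x hxV) ?_ (fun z hz => ?_)
      (hG.2.2.1 y x ▸ hyx)).trans hx_min
    · exact mul_le_mul_of_nonneg_left ((pPow_strictMono hp).monotone (by linarith)) (hc x hxV)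
    · exact hx_min ▸ h_le z (mem_union_bdry_of_adj hxV (hG.2.2.1 x z ▸ hz))
  rcases mem_union_bdry_of_adj hxV hyx with hy | hy
  · exact hyS ⟨hy, hy_min⟩
  · linarith [hbd y hy]

theorem ConnectedIn.eq_or_lt_of_hOp_le (hconn : ConnectedIn b V) (hG : IsGraph m b) (hp : 1 < p)
    (hu : MemF b p V u) (hv : MemF b p V v)
    (hH : ∀ x ∈ V, HOp m b c p u x ≤ HOp m b c p v x)
    (hle : ∀ x ∈ V ∪ bdry b V, u x ≤ v x) :
    (∀ x ∈ V, u x = v x) ∨ ∀ x ∈ V, u x < v x := by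
  rcases {x ∈ V | u x = v x}.eq_empty_or_nonempty with h_empty | h_contact
  · right
    intro x hx
    exact (hle x (Or.inl hx)).lt_of_ne fun h => h_empty.subset ⟨hx, h⟩
  left
  by_contra h_ne_all
  obtain ⟨y, ⟨hyS, x, ⟨hxV, hx_eq⟩, hyx⟩, hyV⟩ :=
    hconn.bdry_inter_nonempty hG.2.2.1 (Set.sep_subset _ _) h_contact
      (mt Set.sep_eq_self_iff_mem_true.1 h_ne_all)
  have hy_eq : v y - u y = v x - u x := by
    refine sub_eq_sub_of_hOp_le hG hp (hu x hxV) (hv x hxV) (hH x hxV) (by rw [hx_eq])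
      (fun z hz => ?_) (hG.2.2.1 y x ▸ hyx)
    linarith [hle z (mem_union_bdry_of_adj hxV (hG.2.2.1 x z ▸ hz))]
  exact hyS ⟨hyV, by linarith⟩

theorem stmt13_general (hG : IsGraph m b) (hp : 1 < p)
    (hV : ∀ S ⊆ V, S.Nonempty → (bdry b S).Nonempty) (hc : ∀ x ∈ V, 0 ≤ c x)
    (hu : MemF b p V u) (hv : MemF b p V v)
    (hH : ∀ x ∈ V, HOp m b c p u x ≤ HOp m b c p v x)
    (hbd : ∀ x ∈ bdry b V, u x ≤ v x)
    (hmin : ∃ x₀ ∈ V, ∀ y ∈ V, min (v x₀ - u x₀) 0 ≤ min (v y - u y) 0) :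
    (∀ x ∈ V, u x ≤ v x) ∧
    ∀ W ⊆ V, ConnectedIn b W → (∀ x ∈ W, u x = v x) ∨ ∀ x ∈ W, u x < v x := by
  have hle : ∀ x ∈ V, u x ≤ v x := le_of_hOp_le hG hp hV hc hu hv hH hbd hmin
  refine ⟨hle, fun W hWV hW => ?_⟩
  exact hW.eq_or_lt_of_hOp_le hG hp (fun x hx => hu x (hWV hx)) (fun x hx => hv x (hWV hx))
    (fun x hx => hH x (hWV hx)) fun x hx => (union_bdry_mono hWV hx).elim (hle x) (hbd x)

end Comparison

theorem stmt13 {X : Type*} [Countable X] [Infinite X]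
    (m : X → ℝ) (b : X → X → ℝ) (c : X → ℝ) (p : ℝ)
    (hG : IsGraph m b) (hgconn : ConnectedIn b Set.univ) (hp : 1 < p)
    (V : Set X) (hV : V ≠ Set.univ) (hc : ∀ x ∈ V, 0 ≤ c x)
    (u v : X → ℝ) (huF : MemF b p V u) (hvF : MemF b p V v)
    (hHuv : ∀ x ∈ V, HOp m b c p u x ≤ HOp m b c p v x)
    (hbd : ∀ x ∈ bdry b V, u x ≤ v x)
    (hmin : ∃ x₀ ∈ V, ∀ y ∈ V, min (v x₀ - u x₀) 0 ≤ min (v y - u y) 0) :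
    (∀ x ∈ V, u x ≤ v x) ∧
    ∀ W : Set X, IsComponentIn b V W →
      (∀ x ∈ W, u x = v x) ∨ ∀ x ∈ W, u x < v x := by
  have h_bdry : ∀ S ⊆ V, S.Nonempty → (bdry b S).Nonempty := fun S hSV hS =>
    (hgconn.bdry_inter_nonempty hG.2.2.1 (Set.subset_univ S) hS
      fun h => hV (Set.univ_subset_iff.1 (h ▸ hSV))).left
  exact (stmt13_general hG hp h_bdry hc huF hvF hHuv hbd hmin).imp_right
    fun h W hW => h W hW.1 hW.2.2.1
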